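/- Let X ~ N(0, Σ^X) and Y ~ N(0, Σ^Y) be centered Gaussian random vectors in R^k such that for all 1 ≤ i, j ≤ k, 2|Σ^X_{ij} − Σ^Y_{ij}| ≤ (Σ^Y_{ii} − Σ^X_{ii}) + (Σ^Y_{jj} − Σ^X_{jj}), and assume the nondegeneracy conditions Var(X_i) > 0, Var(Y_i) > 0 for all i and |Corr(X_i, X_j)| < 1, |Corr(Y_i, Y_j)| < 1 for all i ≠ j. Fix a real m ≥ 1 and for an even integer p define f_p(x_1,...,x_k) = (x_1^p + ... + x_k^p + e^{−p^2})^{m/p}. Then limsup_{p → ∞, p even} (E[f_p(X)] − E[f_p(Y)]) ≤ 0. -/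

import Mathlib

open MeasureTheory ProbabilityTheory Real Filter
open scoped NNReal BigOperators Topology

/-- A random vector `X` on `(Ω, P)` is a centered Gaussian random vector if every
linear combination of its coordinates is a centered real Gaussian random variable. -/
def IsCenteredGaussianVec {Ω : Type*} [MeasurableSpace Ω] {k : ℕ}
    (P : Measure Ω) (X : Ω → Fin k → ℝ) : Prop :=
  ∀ a : Fin k → ℝ,
    Measure.map (fun ω => ∑ i, a i * X ω i) P
      = gaussianReal 0 (variance (fun ω => ∑ i, a i * X ω i) P).toNNReal

/-- The covariance `Cov(f, g) = E[f g] - E[f] E[g]` of two real random variables. -/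
noncomputable def covar {Ω : Type*} [MeasurableSpace Ω] (P : Measure Ω)
    (f g : Ω → ℝ) : ℝ :=
  (∫ ω, f ω * g ω ∂P) - (∫ ω, f ω ∂P) * ∫ ω, g ω ∂P

/-- The Pearson correlation `Corr(f, g) = Cov(f, g) / sqrt(Var f · Var g)`. -/
noncomputable def corr {Ω : Type*} [MeasurableSpace Ω] (P : Measure Ω)
    (f g : Ω → ℝ) : ℝ :=
  covar P f g / Real.sqrt (variance f P * variance g P)

/-!
As `p → ∞`, `f_p(x)` converges to `‖x‖ ^ m` for the sup norm, dominated by a power of `1 + ‖x‖`, so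
the claim is the moment inequality `E ‖X‖ ^ m ≤ E ‖Y‖ ^ m`. For `m > 1`, `u ^ m` is the mixture of
the hinges `(u - a)⁺` with density `m (m - 1) a ^ (m - 2)`, and `(‖x‖ - a)⁺` is the maximum of `0`
and the `± x i - a`. The covariance hypothesis says exactly that all increments of `(0, X, -X)` have
smaller variance than those of `(0, Y, -Y)`, so the Sudakov–Fernique inequality compares the hinges.

Sudakov–Fernique is obtained by a Lindeberg exchange instead of Gaussian interpolation. The
second-order term of log-sum-exp at `w` in direction `h` is half the Gibbs variance of `h`, a
positive combination of the squares `(h i - h j) ^ 2`. Hence the inequality holds up to a cubic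
error for small perturbations of `w`, and the error is removed by splitting the Gaussian laws into
many small independent pieces. Log-sum-exp of `β x`, divided by `β`, tends to the maximum of `x`.
-/

section Lindeberg

lemma integrable_comp_of_lipschitzWith {α E F : Type*} [MeasurableSpace α] {μ : Measure α}
    [IsFiniteMeasure μ] [NormedAddCommGroup E] [NormedAddCommGroup F] {L : ℝ≥0} {f : E → F}
    (hf : LipschitzWith L f) {g : α → E} (hg : Integrable g μ) :
    Integrable (fun a => f (g a)) μ := by
  have hsub : LipschitzWith L (fun x => f x - f 0) := by
    simpa using hf.sub (LipschitzWith.const (f 0))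
  have hmem := hsub.comp_memLp (sub_self _) (memLp_one_iff_integrable.2 hg)
  refine ((memLp_one_iff_integrable.1 hmem).add (integrable_const (f 0))).congr ?_
  exact ae_of_all _ fun a => sub_add_cancel (f (g a)) (f 0)

variable {E : Type*} [NormedAddCommGroup E] [NormedSpace ℝ E] [CompleteSpace E]
  [SecondCountableTopology E] [MeasurableSpace E] [BorelSpace E]
  {μ ν : Measure E} [IsGaussian μ] [IsGaussian ν] {f : E → ℝ} {L : ℝ≥0}

lemma measurePreserving_cos_smul_add_sin_smul (hμ : ∫ x, x ∂μ = 0) (θ : ℝ) :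
    MeasurePreserving (fun p : E × E => cos θ • p.1 + sin θ • p.2) (μ.prod μ) μ := by
  have hrot : MeasurePreserving (ContinuousLinearMap.rotation θ) (μ.prod μ) (μ.prod μ) :=
    ⟨(ContinuousLinearMap.rotation θ).continuous.measurable, IsGaussian.map_rotation_eq_self hμ θ⟩
  exact measurePreserving_fst.comp hrot

lemma integrable_comp_add_smul_add_smul (hf : LipschitzWith L f) (w : E) (a b : ℝ) :
    Integrable (fun p : E × E => f (w + a • p.1 + b • p.2)) (μ.prod ν) :=
  integrable_comp_of_lipschitzWith hf <|
    ((integrable_const w).add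
      (((IsGaussian.integrable_id (μ := μ)).comp_fst ν).smul a)).add
      (((IsGaussian.integrable_id (μ := ν)).comp_snd μ).smul b)

lemma integral_integral_comp_add_smul_add_smul (hμ : ∫ x, x ∂μ = 0) (hf : LipschitzWith L f)
    (w : E) (ε θ : ℝ) :
    ∫ x, ∫ y, f (w + (ε * cos θ) • x + (ε * sin θ) • y) ∂μ ∂μ = ∫ x, f (w + ε • x) ∂μ := by
  have hrot := measurePreserving_cos_smul_add_sin_smul hμ θ
  have hcont : Continuous fun x => f (w + ε • x) := hf.continuous.comp (by fun_prop)
  calc ∫ x, ∫ y, f (w + (ε * cos θ) • x + (ε * sin θ) • y) ∂μ ∂μ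
      = ∫ p : E × E, f (w + (ε * cos θ) • p.1 + (ε * sin θ) • p.2) ∂μ.prod μ :=
        (integral_prod _ (integrable_comp_add_smul_add_smul hf w _ _)).symm
    _ = ∫ p : E × E, f (w + ε • (cos θ • p.1 + sin θ • p.2)) ∂μ.prod μ := by
        simp only [smul_add, smul_smul, add_assoc]
    _ = ∫ x, f (w + ε • x) ∂μ := by
        conv_rhs => rw [← hrot.map_eq]
        exact (integral_map hrot.aemeasurable hcont.aestronglyMeasurable).symm

lemma integral_integral_le_add (hf : LipschitzWith L f) {s δ : ℝ}
    (h : ∀ w, ∫ x, f (w + s • x) ∂μ ≤ ∫ x, f (w + s • x) ∂ν + δ)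
    (ρ : Measure E) [IsGaussian ρ] (w : E) :
    ∫ x, ∫ y, f (w + s • x + s • y) ∂μ ∂ρ ≤ ∫ x, ∫ y, f (w + s • x + s • y) ∂ν ∂ρ + δ := by
  have hint (κ : Measure E) [IsGaussian κ] :
      Integrable (fun x => ∫ y, f (w + s • x + s • y) ∂κ) ρ :=
    (integrable_comp_add_smul_add_smul hf w s s).integral_prod_left
  calc ∫ x, ∫ y, f (w + s • x + s • y) ∂μ ∂ρ
      ≤ ∫ x, (∫ y, f (w + s • x + s • y) ∂ν + δ) ∂ρ :=
        integral_mono (hint μ) ((hint ν).add (integrable_const δ)) fun x => h (w + s • x)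
    _ = _ := by rw [integral_add (hint ν) (integrable_const δ)]; simp

lemma integral_le_add_two_mul (hμ : ∫ x, x ∂μ = 0) (hν : ∫ x, x ∂ν = 0)
    (hf : LipschitzWith L f) {ε δ : ℝ}
    (h : ∀ w, ∫ x, f (w + (ε * (√2 / 2)) • x) ∂μ ≤ ∫ x, f (w + (ε * (√2 / 2)) • x) ∂ν + δ)
    (w : E) :
    ∫ x, f (w + ε • x) ∂μ ≤ ∫ x, f (w + ε • x) ∂ν + 2 * δ := by
  have hsplitμ := integral_integral_comp_add_smul_add_smul hμ hf w ε (π / 4)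
  have hsplitν := integral_integral_comp_add_smul_add_smul hν hf w ε (π / 4)
  rw [cos_pi_div_four, sin_pi_div_four] at hsplitμ hsplitν
  set s := ε * (√2 / 2)
  have hswap : ∫ x, ∫ y, f (w + s • x + s • y) ∂ν ∂μ = ∫ x, ∫ y, f (w + s • x + s • y) ∂μ ∂ν := by
    rw [integral_integral_swap (integrable_comp_add_smul_add_smul hf w s s)]
    simp only [add_right_comm]
  linarith [integral_integral_le_add hf h μ w, integral_integral_le_add hf h ν w]

-- Both laws are `2 ^ n`-fold convolutions of themselves scaled by `2 ^ (-n / 2)`. Exchanging the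
-- `2 ^ n` factors one at a time costs `K * 2 ^ (-3 * n / 2)` each, which vanishes in the limit.
theorem integral_le_of_forall_le_add_cube (hμ : ∫ x, x ∂μ = 0) (hν : ∫ x, x ∂ν = 0)
    (hf : LipschitzWith L f) {K : ℝ}
    (h : ∀ w ε, 0 ≤ ε → ∫ x, f (w + ε • x) ∂μ ≤ ∫ x, f (w + ε • x) ∂ν + K * ε ^ 3)
    (w : E) {ε : ℝ} (hε : 0 ≤ ε) :
    ∫ x, f (w + ε • x) ∂μ ≤ ∫ x, f (w + ε • x) ∂ν := by
  have hsq : (√2 / 2) ^ 2 = (1 / 2 : ℝ) := by rw [div_pow, sq_sqrt zero_le_two]; norm_num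
  have hiter : ∀ (n : ℕ) (ε : ℝ), 0 ≤ ε → ∀ w,
      ∫ x, f (w + ε • x) ∂μ ≤ ∫ x, f (w + ε • x) ∂ν + K * ε ^ 3 * (√2 / 2) ^ n := by
    intro n
    induction n with
    | zero => intro ε hε w; simpa using h w ε hε
    | succ n ih =>
      intro ε hε w
      refine (integral_le_add_two_mul hμ hν hf (ih _ (by positivity)) w).trans_eq ?_
      linear_combination 2 * K * ε ^ 3 * (√2 / 2) ^ (n + 1) * hsq
  have hlt : √2 / 2 < 1 := by nlinarith [sqrt_nonneg 2]
  have hlim : Tendsto (fun n => ∫ x, f (w + ε • x) ∂ν + K * ε ^ 3 * (√2 / 2) ^ n) atTop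
      (𝓝 (∫ x, f (w + ε • x) ∂ν)) := by
    simpa using ((tendsto_pow_atTop_nhds_zero_of_lt_one (by positivity) hlt).const_mul
      (K * ε ^ 3)).const_add (∫ x, f (w + ε • x) ∂ν)
  exact ge_of_tendsto' hlim fun n => hiter n ε hε w

end Lindeberg

section Taylor

lemma abs_sub_le_of_abs_hasDerivAt_le {g g' : ℝ → ℝ} {C s : ℝ} (hg : ∀ t, HasDerivAt g (g' t) t)
    (hC : ∀ t ∈ Set.Icc (0 : ℝ) 1, |g' t| ≤ C) (hs : s ∈ Set.Icc (0 : ℝ) 1) :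
    |g s - g 0| ≤ C := by
  have hmvt := (convex_Icc (0 : ℝ) 1).norm_image_sub_le_of_norm_hasDerivWithin_le
    (fun t _ => (hg t).hasDerivWithinAt) hC (Set.left_mem_Icc.2 zero_le_one) hs
  refine hmvt.trans (mul_le_of_le_one_right ((abs_nonneg _).trans (hC s hs)) ?_)
  rw [sub_zero, norm_eq_abs, abs_of_nonneg hs.1]
  exact hs.2

lemma abs_sub_taylor_two_le {g g₁ g₂ g₃ : ℝ → ℝ} {C : ℝ} (h₁ : ∀ t, HasDerivAt g (g₁ t) t)
    (h₂ : ∀ t, HasDerivAt g₁ (g₂ t) t) (h₃ : ∀ t, HasDerivAt g₂ (g₃ t) t) (hC : ∀ t, |g₃ t| ≤ C) :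
    |g 1 - (g 0 + g₁ 0 + g₂ 0 / 2)| ≤ C := by
  have hbound₂ : ∀ t ∈ Set.Icc (0 : ℝ) 1, |g₂ t - g₂ 0| ≤ C := fun t ht =>
    abs_sub_le_of_abs_hasDerivAt_le h₃ (fun s _ => hC s) ht
  have hbound₁ : ∀ t ∈ Set.Icc (0 : ℝ) 1, |g₁ t - (g₁ 0 + g₂ 0 * t)| ≤ C := fun t ht => by
    have hderiv (s : ℝ) : HasDerivAt (fun s => g₁ s - g₂ 0 * s) (g₂ s - g₂ 0) s := by
      simpa using (h₂ s).fun_sub ((hasDerivAt_id s).const_mul (g₂ 0))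
    convert abs_sub_le_of_abs_hasDerivAt_le hderiv hbound₂ ht using 2
    ring
  have hderiv (s : ℝ) : HasDerivAt (fun s => g s - (g₁ 0 * s + g₂ 0 * (s ^ 2 / 2)))
      (g₁ s - (g₁ 0 + g₂ 0 * s)) s := by
    simpa using (h₁ s).fun_sub (((hasDerivAt_id s).const_mul (g₁ 0)).fun_add
      (((hasDerivAt_pow 2 s).div_const 2).const_mul (g₂ 0)))
  convert abs_sub_le_of_abs_hasDerivAt_le hderiv hbound₁ (Set.right_mem_Icc.2 zero_le_one) using 2
  ring

end Taylor

lemma hasDerivAt_exp_line {ι : Type*} (w h : ι → ℝ) (i : ι) (t : ℝ) :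
    HasDerivAt (fun t : ℝ => exp ((w + t • h) i)) (exp ((w + t • h) i) * h i) t := by
  simpa using (((hasDerivAt_id t).mul_const (h i)).const_add (w i)).exp

section LogSumExp

variable {ι : Type*} [Fintype ι]

/-- The log-sum-exp function `log (∑ i, exp (x i))`, a smooth approximation of `⨆ i, x i` (see
`iSup_le_logSumExp` and `logSumExp_le_iSup_add_log_card`). -/
noncomputable def logSumExp (x : ι → ℝ) : ℝ := log (∑ i, exp (x i))

/-- The mean of `φ` under the Gibbs distribution on `ι`, whose weights are proportional to
`exp (w i)`. It is the derivative of `logSumExp` at `w` in direction `φ`. -/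
noncomputable def gibbsMean (w φ : ι → ℝ) : ℝ := (∑ i, exp (w i) * φ i) / ∑ i, exp (w i)

/-- The variance of `h` under the Gibbs distribution with weights proportional to `exp (w i)`. It is
the second derivative of `logSumExp` at `w` in direction `h`. -/
noncomputable def gibbsVariance (w h : ι → ℝ) : ℝ := gibbsMean w (h ^ 2) - gibbsMean w h ^ 2

lemma gibbsMean_smul (w φ : ι → ℝ) (ε : ℝ) : gibbsMean w (ε • φ) = ε * gibbsMean w φ := by
  simp only [gibbsMean, Pi.smul_apply, smul_eq_mul, mul_left_comm _ ε, ← Finset.mul_sum,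
    mul_div_assoc]

lemma gibbsVariance_smul (w h : ι → ℝ) (ε : ℝ) :
    gibbsVariance w (ε • h) = ε ^ 2 * gibbsVariance w h := by
  rw [gibbsVariance, gibbsVariance, smul_pow, gibbsMean_smul, gibbsMean_smul]
  ring

variable [Nonempty ι]

lemma sum_exp_pos (w : ι → ℝ) : 0 < ∑ i, exp (w i) :=
  Finset.sum_pos (fun i _ => exp_pos (w i)) Finset.univ_nonempty

lemma abs_gibbsMean_le_norm (w φ : ι → ℝ) : |gibbsMean w φ| ≤ ‖φ‖ := by
  rw [gibbsMean, abs_div, abs_of_pos (sum_exp_pos w), div_le_iff₀ (sum_exp_pos w), Finset.mul_sum]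
  refine (Finset.abs_sum_le_sum_abs _ _).trans (Finset.sum_le_sum fun i _ => ?_)
  rw [abs_mul, abs_exp, mul_comm]
  gcongr
  exact norm_le_pi_norm φ i

lemma gibbsVariance_eq_sum_sq_sub (w h : ι → ℝ) :
    gibbsVariance w h =
      (∑ i, ∑ j, exp (w i) * exp (w j) * (h i - h j) ^ 2) / (2 * (∑ i, exp (w i)) ^ 2) := by
  have hexpand : ∑ i, ∑ j, exp (w i) * exp (w j) * (h i - h j) ^ 2 =
      2 * ((∑ i, exp (w i)) * ∑ i, exp (w i) * h i ^ 2 - (∑ i, exp (w i) * h i) ^ 2) := by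
    calc ∑ i, ∑ j, exp (w i) * exp (w j) * (h i - h j) ^ 2
        = ∑ i, ∑ j, (exp (w i) * h i ^ 2 * exp (w j) + exp (w i) * (exp (w j) * h j ^ 2)
            - 2 * (exp (w i) * h i * (exp (w j) * h j))) := by
          refine Finset.sum_congr rfl fun i _ => Finset.sum_congr rfl fun j _ => ?_
          ring
      _ = _ := by
          simp only [Finset.sum_sub_distrib, Finset.sum_add_distrib, ← Finset.mul_sum,
            ← Finset.sum_mul]
          ring
  have hZ := (sum_exp_pos w).ne'
  simp only [hexpand, gibbsVariance, gibbsMean, Pi.pow_apply]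
  field_simp

lemma logSumExp_le_add_dist (x y : ι → ℝ) : logSumExp x ≤ logSumExp y + dist x y := by
  have hsum : ∑ i, exp (x i) ≤ (∑ i, exp (y i)) * exp (dist x y) := by
    rw [Finset.sum_mul]
    refine Finset.sum_le_sum fun i _ => ?_
    rw [← exp_add, exp_le_exp]
    have hi := dist_le_pi_dist x y i
    rw [dist_eq] at hi
    linarith [le_abs_self (x i - y i)]
  calc logSumExp x ≤ log ((∑ i, exp (y i)) * exp (dist x y)) := log_le_log (sum_exp_pos x) hsum
    _ = logSumExp y + dist x y := by
      rw [log_mul (sum_exp_pos y).ne' (exp_pos _).ne', log_exp, logSumExp]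

lemma lipschitzWith_logSumExp : LipschitzWith 1 (logSumExp : (ι → ℝ) → ℝ) :=
  LipschitzWith.of_le_add logSumExp_le_add_dist

lemma iSup_le_logSumExp (x : ι → ℝ) : ⨆ i, x i ≤ logSumExp x :=
  ciSup_le fun i => (le_log_iff_exp_le (sum_exp_pos x)).2 <|
    Finset.single_le_sum (f := fun i => exp (x i)) (fun j _ => (exp_pos (x j)).le)
      (Finset.mem_univ i)

lemma logSumExp_le_iSup_add_log_card (x : ι → ℝ) :
    logSumExp x ≤ (⨆ i, x i) + log (Fintype.card ι) := by
  have hcard : (0 : ℝ) < Fintype.card ι := Nat.cast_pos.2 Fintype.card_pos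
  rw [logSumExp, log_le_iff_le_exp (sum_exp_pos x), exp_add, exp_log hcard]
  calc ∑ i, exp (x i) ≤ ∑ _i : ι, exp (⨆ i, x i) :=
        Finset.sum_le_sum fun i _ => exp_le_exp.2 (le_ciSup (Set.finite_range x).bddAbove i)
    _ = exp (⨆ i, x i) * Fintype.card ι := by
        rw [Finset.sum_const, Finset.card_univ, nsmul_eq_mul, mul_comm]

lemma hasDerivAt_logSumExp_line (w h : ι → ℝ) (t : ℝ) :
    HasDerivAt (fun t : ℝ => logSumExp (w + t • h)) (gibbsMean (w + t • h) h) t :=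
  (HasDerivAt.fun_sum fun i _ => hasDerivAt_exp_line w h i t).log (sum_exp_pos _).ne'

lemma hasDerivAt_gibbsMean_line (w h φ : ι → ℝ) (t : ℝ) :
    HasDerivAt (fun t : ℝ => gibbsMean (w + t • h) φ)
      (gibbsMean (w + t • h) (h * φ) - gibbsMean (w + t • h) h * gibbsMean (w + t • h) φ) t := by
  have hZ := (sum_exp_pos (w + t • h)).ne'
  have hnum := HasDerivAt.fun_sum (u := Finset.univ) fun i _ =>
    (hasDerivAt_exp_line w h i t).mul_const (φ i)
  have hden := HasDerivAt.fun_sum (u := Finset.univ) fun i _ => hasDerivAt_exp_line w h i t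
  refine (hnum.fun_div hden hZ).congr_deriv ?_
  simp only [gibbsMean, Pi.mul_apply, mul_assoc] at hZ ⊢
  field_simp

lemma hasDerivAt_gibbsVariance_line (w h : ι → ℝ) (t : ℝ) :
    HasDerivAt (fun t : ℝ => gibbsVariance (w + t • h) h)
      (gibbsMean (w + t • h) (h ^ 3) - 3 * gibbsMean (w + t • h) h * gibbsMean (w + t • h) (h ^ 2)
        + 2 * gibbsMean (w + t • h) h ^ 3) t := by
  refine ((hasDerivAt_gibbsMean_line w h (h ^ 2) t).fun_sub
    ((hasDerivAt_gibbsMean_line w h h t).fun_pow 2)).congr_deriv ?_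
  rw [← pow_succ', ← pow_two]
  ring

lemma abs_gibbsMean_pow_le (w h : ι → ℝ) {r : ℕ} (hr : 0 < r) :
    |gibbsMean w (h ^ r)| ≤ ‖h‖ ^ r :=
  (abs_gibbsMean_le_norm w _).trans (norm_pow_le' h hr)

lemma abs_gibbs_third_cumulant_le (w h : ι → ℝ) :
    |gibbsMean w (h ^ 3) - 3 * gibbsMean w h * gibbsMean w (h ^ 2) + 2 * gibbsMean w h ^ 3|
      ≤ 6 * ‖h‖ ^ 3 := by
  have h₁ := abs_gibbsMean_le_norm w h
  have h₂ := abs_gibbsMean_pow_le w h two_pos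
  have h₃ := abs_gibbsMean_pow_le w h three_pos
  calc _ ≤ |gibbsMean w (h ^ 3)| + 3 * (|gibbsMean w h| * |gibbsMean w (h ^ 2)|)
          + 2 * |gibbsMean w h| ^ 3 := by
        refine (abs_add_le _ _).trans (add_le_add ((abs_sub _ _).trans_eq ?_) ?_) <;>
          simp [abs_mul, mul_assoc]
    _ ≤ ‖h‖ ^ 3 + 3 * (‖h‖ * ‖h‖ ^ 2) + 2 * ‖h‖ ^ 3 := by gcongr
    _ = 6 * ‖h‖ ^ 3 := by ring

lemma abs_logSumExp_sub_taylor_two_le (w h : ι → ℝ) :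
    |logSumExp (w + h) - (logSumExp w + gibbsMean w h + gibbsVariance w h / 2)|
      ≤ 6 * ‖h‖ ^ 3 := by
  simpa using abs_sub_taylor_two_le (hasDerivAt_logSumExp_line w h)
    (fun t => (hasDerivAt_gibbsMean_line w h h t).congr_deriv (by
      rw [gibbsVariance, ← pow_two, ← pow_two]))
    (hasDerivAt_gibbsVariance_line w h) fun t => abs_gibbs_third_cumulant_le (w + t • h) h

end LogSumExp

section SudakovFernique

variable {ι : Type*} [Fintype ι] {μ ν : Measure (ι → ℝ)}

lemma integrable_sub_sq (hμ : MemLp id 2 μ) (i j : ι) :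
    Integrable (fun x => (x i - x j) ^ 2) μ :=
  ((hμ.eval i).sub (hμ.eval j)).integrable_sq

lemma integrable_gibbsMean (hμ : Integrable id μ) (w : ι → ℝ) :
    Integrable (fun x => gibbsMean w x) μ :=
  (integrable_finsetSum _ fun i _ => (hμ.eval i).const_mul _).div_const _

lemma integral_gibbsMean (hμ : Integrable id μ) (w : ι → ℝ) :
    ∫ x, gibbsMean w x ∂μ = gibbsMean w (∫ x, x ∂μ) := by
  have hsum : ∫ x, ∑ i, exp (w i) * x i ∂μ = ∑ i, exp (w i) * ∫ x, x i ∂μ := by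
    refine (integral_finsetSum _ fun i _ => (hμ.eval i).const_mul _).trans ?_
    simp only [id, integral_const_mul]
  have heval (i : ι) : (∫ x, x ∂μ) i = ∫ x, x i ∂μ := eval_integral hμ.eval i
  simp only [gibbsMean, integral_div, hsum, heval]

variable [Nonempty ι]

lemma integrable_gibbsVariance (hμ : MemLp id 2 μ) (w : ι → ℝ) :
    Integrable (gibbsVariance w) μ := by
  simp only [funext (gibbsVariance_eq_sum_sq_sub w)]
  exact (integrable_finsetSum _ fun i _ => integrable_finsetSum _ fun j _ =>
    (integrable_sub_sq hμ i j).const_mul _).div_const _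

lemma integral_gibbsVariance (hμ : MemLp id 2 μ) (w : ι → ℝ) :
    ∫ x, gibbsVariance w x ∂μ =
      (∑ i, ∑ j, exp (w i) * exp (w j) * ∫ x, (x i - x j) ^ 2 ∂μ) /
        (2 * (∑ i, exp (w i)) ^ 2) := by
  have hint (i j : ι) := (integrable_sub_sq hμ i j).const_mul (exp (w i) * exp (w j))
  simp only [gibbsVariance_eq_sum_sq_sub, integral_div]
  rw [integral_finsetSum _ fun i _ => integrable_finsetSum _ fun j _ => hint i j]
  simp only [integral_finsetSum _ fun j _ => hint _ j, integral_const_mul]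

lemma integral_gibbsVariance_mono (hμ : MemLp id 2 μ) (hν : MemLp id 2 ν)
    (hinc : ∀ i j, ∫ x, (x i - x j) ^ 2 ∂μ ≤ ∫ x, (x i - x j) ^ 2 ∂ν) (w : ι → ℝ) :
    ∫ x, gibbsVariance w x ∂μ ≤ ∫ x, gibbsVariance w x ∂ν := by
  rw [integral_gibbsVariance hμ, integral_gibbsVariance hν]
  refine div_le_div_of_nonneg_right ?_ (by positivity)
  exact Finset.sum_le_sum fun i _ => Finset.sum_le_sum fun j _ =>
    mul_le_mul_of_nonneg_left (hinc i j) (by positivity)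

lemma abs_integral_logSumExp_sub_le [IsProbabilityMeasure μ] (hμ : MemLp id 3 μ)
    (hmean : ∫ x, x ∂μ = 0) (w : ι → ℝ) {ε : ℝ} (hε : 0 ≤ ε) :
    |∫ x, logSumExp (w + ε • x) ∂μ - (logSumExp w + ε ^ 2 / 2 * ∫ x, gibbsVariance w x ∂μ)|
      ≤ 6 * (∫ x, ‖x‖ ^ 3 ∂μ) * ε ^ 3 := by
  have hμ₁ : Integrable id μ := hμ.integrable (by norm_num)
  have hμ₂ : MemLp id 2 μ := hμ.mono_exponent (by norm_num)
  have hlse : Integrable (fun x => logSumExp (w + ε • x)) μ :=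
    integrable_comp_of_lipschitzWith lipschitzWith_logSumExp
      ((integrable_const w).add (hμ₁.smul ε))
  have hmeanInt : Integrable (fun x => ε * gibbsMean w x) μ :=
    (integrable_gibbsMean hμ₁ w).const_mul ε
  have hvarInt := (integrable_gibbsVariance hμ₂ w).const_mul (ε ^ 2 / 2)
  have htaylor : ∫ x, logSumExp (w + ε • x) ∂μ
      - (logSumExp w + ε ^ 2 / 2 * ∫ x, gibbsVariance w x ∂μ) =
      ∫ x, (logSumExp (w + ε • x)
        - (logSumExp w + ε * gibbsMean w x + ε ^ 2 / 2 * gibbsVariance w x)) ∂μ := by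
    have hlin := (integrable_const (μ := μ) (logSumExp w)).fun_add hmeanInt
    rw [integral_sub hlse (hlin.fun_add hvarInt), integral_add hlin hvarInt,
      integral_add (integrable_const _) hmeanInt, integral_const_mul, integral_const_mul,
      integral_gibbsMean hμ₁, hmean]
    simp [gibbsMean]
  rw [htaylor, ← norm_eq_abs, mul_right_comm, ← integral_const_mul]
  refine norm_integral_le_of_norm_le ((hμ.integrable_norm_pow (by norm_num)).const_mul _)
    (ae_of_all _ fun x => ?_)
  have hx := abs_logSumExp_sub_taylor_two_le w (ε • x)
  rw [gibbsMean_smul, gibbsVariance_smul, norm_smul, norm_of_nonneg hε, mul_pow, ← mul_assoc,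
    mul_div_right_comm] at hx
  exact hx

theorem integral_logSumExp_le [IsGaussian μ] [IsGaussian ν]
    (hμ : ∫ x, x ∂μ = 0) (hν : ∫ x, x ∂ν = 0)
    (hinc : ∀ i j, ∫ x, (x i - x j) ^ 2 ∂μ ≤ ∫ x, (x i - x j) ^ 2 ∂ν)
    (w : ι → ℝ) {ε : ℝ} (hε : 0 ≤ ε) :
    ∫ x, logSumExp (w + ε • x) ∂μ ≤ ∫ x, logSumExp (w + ε • x) ∂ν := by
  have hmem (ρ : Measure (ι → ℝ)) [IsGaussian ρ] (p : ℝ≥0) : MemLp id p ρ :=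
    IsGaussian.memLp_id ρ p ENNReal.coe_ne_top
  refine integral_le_of_forall_le_add_cube hμ hν lipschitzWith_logSumExp
    (K := 6 * (∫ x, ‖x‖ ^ 3 ∂μ) + 6 * ∫ x, ‖x‖ ^ 3 ∂ν) (fun w ε hε => ?_) w hε
  have hexpμ := abs_le.1 (abs_integral_logSumExp_sub_le (hmem μ 3) hμ w hε)
  have hexpν := abs_le.1 (abs_integral_logSumExp_sub_le (hmem ν 3) hν w hε)
  have hvar : ε ^ 2 / 2 * ∫ x, gibbsVariance w x ∂μ ≤ ε ^ 2 / 2 * ∫ x, gibbsVariance w x ∂ν :=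
    mul_le_mul_of_nonneg_left
      (integral_gibbsVariance_mono (hmem μ 2) (hmem ν 2) hinc w) (by positivity)
  linarith [hexpμ.2, hexpν.1]

lemma lipschitzWith_iSup : LipschitzWith 1 (fun x : ι → ℝ => ⨆ i, x i) := by
  refine LipschitzWith.of_le_add fun x y => ciSup_le fun i => ?_
  have hi := dist_le_pi_dist x y i
  rw [dist_eq] at hi
  linarith [le_abs_self (x i - y i), le_ciSup (Set.finite_range y).bddAbove i]

lemma integral_iSup_add_le_add_log_card_div [IsGaussian μ] [IsGaussian ν]
    (hμ : ∫ x, x ∂μ = 0) (hν : ∫ x, x ∂ν = 0)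
    (hinc : ∀ i j, ∫ x, (x i - x j) ^ 2 ∂μ ≤ ∫ x, (x i - x j) ^ 2 ∂ν)
    (b : ι → ℝ) {β : ℝ} (hβ : 0 < β) :
    ∫ x, ⨆ i, (b i + x i) ∂μ ≤ ∫ x, ⨆ i, (b i + x i) ∂ν + log (Fintype.card ι) / β := by
  have hsup (ρ : Measure (ι → ℝ)) [IsGaussian ρ] :
      Integrable (fun x => β * ⨆ i, (b i + x i)) ρ :=
    (integrable_comp_of_lipschitzWith lipschitzWith_iSup
      ((integrable_const b).add (IsGaussian.integrable_id (μ := ρ)))).const_mul β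
  have hlse (ρ : Measure (ι → ℝ)) [IsGaussian ρ] :
      Integrable (fun x => logSumExp (β • b + β • x)) ρ :=
    integrable_comp_of_lipschitzWith lipschitzWith_logSumExp
      ((integrable_const (β • b)).add ((IsGaussian.integrable_id (μ := ρ)).smul β))
  have hscale (x : ι → ℝ) : β * ⨆ i, (b i + x i) = ⨆ i, (β • b + β • x) i := by
    simp only [mul_iSup_of_nonneg hβ.le, mul_add, Pi.add_apply, Pi.smul_apply, smul_eq_mul]
  rw [← mul_le_mul_iff_right₀ hβ, mul_add, mul_div_cancel₀ _ hβ.ne']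
  calc β * ∫ x, ⨆ i, (b i + x i) ∂μ
      = ∫ x, β * ⨆ i, (b i + x i) ∂μ := (integral_const_mul _ _).symm
    _ ≤ ∫ x, logSumExp (β • b + β • x) ∂μ :=
        integral_mono (hsup μ) (hlse μ) fun x => (hscale x).trans_le (iSup_le_logSumExp _)
    _ ≤ ∫ x, logSumExp (β • b + β • x) ∂ν := integral_logSumExp_le hμ hν hinc _ hβ.le
    _ ≤ ∫ x, (β * (⨆ i, (b i + x i)) + log (Fintype.card ι)) ∂ν :=
        integral_mono (hlse ν) ((hsup ν).add (integrable_const _)) fun x =>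
          (logSumExp_le_iSup_add_log_card _).trans_eq (by simp only [hscale])
    _ = β * ∫ x, ⨆ i, (b i + x i) ∂ν + log (Fintype.card ι) := by
        rw [integral_add (hsup ν) (integrable_const _), integral_const_mul,
          integral_const, probReal_univ, one_smul]

theorem sudakov_fernique [IsGaussian μ] [IsGaussian ν]
    (hμ : ∫ x, x ∂μ = 0) (hν : ∫ x, x ∂ν = 0)
    (hinc : ∀ i j, ∫ x, (x i - x j) ^ 2 ∂μ ≤ ∫ x, (x i - x j) ^ 2 ∂ν) (b : ι → ℝ) :
    ∫ x, ⨆ i, (b i + x i) ∂μ ≤ ∫ x, ⨆ i, (b i + x i) ∂ν := by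
  have hlim : Tendsto (fun β : ℝ => ∫ x, ⨆ i, (b i + x i) ∂ν + log (Fintype.card ι) / β) atTop
      (𝓝 (∫ x, ⨆ i, (b i + x i) ∂ν)) := by
    simpa using (tendsto_const_nhds.div_atTop tendsto_id).const_add
      (∫ x, ⨆ i, (b i + x i) ∂ν)
  exact ge_of_tendsto hlim ((eventually_gt_atTop 0).mono fun β hβ =>
    integral_iSup_add_le_add_log_card_div hμ hν hinc b hβ)

end SudakovFernique

section Norm

variable {ι : Type*} {μ ν : Measure (ι → ℝ)}

/-- The coordinates `0`, `x i` and `-x i` of a vector `x`, indexed by `none`, `inl i` and `inr i`.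
Their maximum is the sup norm of `x`, which turns a comparison of maxima into one of norms. -/
noncomputable def signedCoords : (ι → ℝ) →L[ℝ] (Option (ι ⊕ ι) → ℝ) :=
  ContinuousLinearMap.pi fun o => o.elim 0
    (Sum.elim (fun i => ContinuousLinearMap.proj i) fun i => -ContinuousLinearMap.proj i)

lemma integral_signedCoords_sub_sq_le
    (hsub : ∀ i j, ∫ x, (x i - x j) ^ 2 ∂μ ≤ ∫ x, (x i - x j) ^ 2 ∂ν)
    (hadd : ∀ i j, ∫ x, (x i + x j) ^ 2 ∂μ ≤ ∫ x, (x i + x j) ^ 2 ∂ν) (o o' : Option (ι ⊕ ι)) :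
    ∫ x, (signedCoords x o - signedCoords x o') ^ 2 ∂μ ≤
      ∫ x, (signedCoords x o - signedCoords x o') ^ 2 ∂ν := by
  have hsq (i : ι) : ∫ x, x i ^ 2 ∂μ ≤ ∫ x, x i ^ 2 ∂ν := by
    have hi := hadd i i
    simp only [← two_mul, mul_pow, integral_const_mul] at hi
    linarith
  have hneg (i j : ι) (x : ι → ℝ) : (-x i - x j) ^ 2 = (x i + x j) ^ 2 := by ring
  have hswap (i j : ι) (x : ι → ℝ) : (-x i + x j) ^ 2 = (x i - x j) ^ 2 := by ring
  rcases o with _ | i | i <;> rcases o' with _ | j | j <;>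
    simp [signedCoords, hsub, hadd, hsq, hneg, hswap]

variable [Fintype ι]

lemma iSup_add_signedCoords {a : ℝ} (ha : 0 ≤ a) (x : ι → ℝ) :
    ⨆ o, ((o.elim 0 fun _ => -a : ℝ) + signedCoords x o) = max (‖x‖ - a) 0 := by
  set s : Option (ι ⊕ ι) → ℝ := fun o => (o.elim 0 fun _ => -a : ℝ) + signedCoords x o
  have hs (o) : s o ≤ ⨆ o, s o := le_ciSup (Set.finite_range s).bddAbove o
  have hnone : s none = 0 := by simp [s, signedCoords]
  have hinl (i : ι) : s (some (.inl i)) = x i - a := by simp [s, signedCoords]; ring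
  have hinr (i : ι) : s (some (.inr i)) = -x i - a := by simp [s, signedCoords]; ring
  have hcoord (i : ι) := abs_le.1 (norm_le_pi_norm x i)
  refine le_antisymm (ciSup_le ?_) (max_le ?_ (hnone ▸ hs none))
  · rintro (_ | i | i)
    · exact hnone.trans_le (le_max_right _ _)
    · exact (hinl i).trans_le (le_max_of_le_left (by linarith [hcoord i]))
    · exact (hinr i).trans_le (le_max_of_le_left (by linarith [hcoord i]))
  · rw [sub_le_iff_le_add]
    refine (pi_norm_le_iff_of_nonneg (add_nonneg (hnone ▸ hs none) ha)).2 fun i => abs_le.2 ?_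
    constructor <;> linarith [hinl i ▸ hs _, hinr i ▸ hs _]

theorem integral_max_norm_sub_le [IsGaussian μ] [IsGaussian ν]
    (hμ : ∫ x, x ∂μ = 0) (hν : ∫ x, x ∂ν = 0)
    (hsub : ∀ i j, ∫ x, (x i - x j) ^ 2 ∂μ ≤ ∫ x, (x i - x j) ^ 2 ∂ν)
    (hadd : ∀ i j, ∫ x, (x i + x j) ^ 2 ∂μ ≤ ∫ x, (x i + x j) ^ 2 ∂ν) {a : ℝ} (ha : 0 ≤ a) :
    ∫ x, max (‖x‖ - a) 0 ∂μ ≤ ∫ x, max (‖x‖ - a) 0 ∂ν := by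
  have hmap (ρ : Measure (ι → ℝ)) {g : (Option (ι ⊕ ι) → ℝ) → ℝ} (hg : Continuous g) :
      ∫ y, g y ∂ρ.map signedCoords = ∫ x, g (signedCoords x) ∂ρ :=
    integral_map signedCoords.continuous.aemeasurable hg.aestronglyMeasurable
  have hcenter (ρ : Measure (ι → ℝ)) [IsGaussian ρ] (hρ : ∫ x, x ∂ρ = 0) :
      ∫ y, y ∂ρ.map signedCoords = 0 := by
    rw [(signedCoords (ι := ι)).integral_id_map IsGaussian.integrable_id, hρ, map_zero]
  have hcont : Continuous fun y : Option (ι ⊕ ι) → ℝ => ⨆ o, ((o.elim 0 fun _ => -a : ℝ) + y o) :=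
    lipschitzWith_iSup.continuous.comp (continuous_const.add continuous_id)
  have hsf := sudakov_fernique (hcenter μ hμ) (hcenter ν hν) (fun o o' => by
    rw [hmap μ (by fun_prop), hmap ν (by fun_prop)]
    exact integral_signedCoords_sub_sq_le hsub hadd o o') fun o => o.elim 0 fun _ => -a
  rw [hmap μ hcont, hmap ν hcont] at hsf
  simpa only [iSup_add_signedCoords ha] using hsf

end Norm

section LayerCake

lemma intervalIntegral_rpow_mul_sub {m u : ℝ} (hm : 1 < m) (hu : 0 ≤ u) :
    ∫ a in 0..u, m * (m - 1) * a ^ (m - 2) * (u - a) = u ^ m := by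
  have hexpand : ∀ a ∈ Set.uIcc 0 u, m * (m - 1) * a ^ (m - 2) * (u - a)
      = m * (m - 1) * (u * a ^ (m - 2) - a ^ (m - 1)) := by
    intro a ha
    rw [Set.uIcc_of_le hu] at ha
    rw [show m - 1 = m - 2 + 1 by ring, rpow_add_one' ha.1 (by linarith)]
    ring
  have hu₁ : u * u ^ (m - 1) = u ^ m := by
    rw [mul_comm, ← rpow_add_one' hu (by linarith), sub_add_cancel]
  rw [intervalIntegral.integral_congr hexpand, intervalIntegral.integral_const_mul,
    intervalIntegral.integral_sub
      ((intervalIntegral.intervalIntegrable_rpow' (by linarith)).const_mul u)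
      (intervalIntegral.intervalIntegrable_rpow' (by linarith)),
    intervalIntegral.integral_const_mul, integral_rpow (Or.inl (by linarith)),
    integral_rpow (Or.inl (by linarith)), show m - 2 + 1 = m - 1 by ring, sub_add_cancel,
    zero_rpow (by linarith), zero_rpow (by linarith), sub_zero, sub_zero, ← mul_div_assoc, hu₁]
  have hm₀ : m ≠ 0 := by linarith
  have hm₁ : m - 1 ≠ 0 := by linarith
  field_simp
  ring

lemma ofReal_rpow_eq_lintegral_ofReal_sub {m u : ℝ} (hm : 1 < m) (hu : 0 ≤ u) :
    ENNReal.ofReal (u ^ m) = ∫⁻ a in Set.Ioi 0,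
      ENNReal.ofReal (m * (m - 1) * a ^ (m - 2)) * ENNReal.ofReal (u - a) := by
  have hweight {a : ℝ} (ha : 0 < a) : 0 ≤ m * (m - 1) * a ^ (m - 2) :=
    mul_nonneg (mul_nonneg (by linarith) (by linarith)) (rpow_nonneg ha.le _)
  have htail : ∫⁻ a in Set.Ioi u,
      ENNReal.ofReal (m * (m - 1) * a ^ (m - 2)) * ENNReal.ofReal (u - a) = 0 := by
    refine (setLIntegral_congr_fun measurableSet_Ioi fun a ha => ?_).trans lintegral_zero
    rw [ENNReal.ofReal_of_nonpos (sub_nonpos.2 (le_of_lt ha)), mul_zero]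
  have hint : IntervalIntegrable (fun a => m * (m - 1) * a ^ (m - 2) * (u - a)) volume 0 u :=
    ((intervalIntegral.intervalIntegrable_rpow' (by linarith)).const_mul _).mul_continuousOn
      (by fun_prop)
  rw [← Set.Ioc_union_Ioi_eq_Ioi hu,
    lintegral_union measurableSet_Ioi (Set.Ioc_disjoint_Ioi le_rfl), htail, add_zero,
    ← intervalIntegral_rpow_mul_sub hm hu, intervalIntegral.integral_of_le hu,
    ofReal_integral_eq_lintegral_ofReal
      ((intervalIntegrable_iff_integrableOn_Ioc_of_le hu).1 hint)
      ((ae_restrict_iff' measurableSet_Ioc).2 (ae_of_all _ fun a ha =>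
        mul_nonneg (hweight ha.1) (sub_nonneg.2 ha.2)))]
  exact setLIntegral_congr_fun measurableSet_Ioc fun a ha => ENNReal.ofReal_mul (hweight ha.1)

variable {α β : Type*} [MeasurableSpace α] [MeasurableSpace β] {μ : Measure α} {ν : Measure β}
  [SFinite μ] [SFinite ν]

lemma lintegral_ofReal_rpow {m : ℝ} (hm : 1 < m) {U : α → ℝ} (hU : 0 ≤ U)
    (hUm : Measurable U) :
    ∫⁻ x, ENNReal.ofReal (U x ^ m) ∂μ = ∫⁻ a in Set.Ioi 0,
      ENNReal.ofReal (m * (m - 1) * a ^ (m - 2)) * ∫⁻ x, ENNReal.ofReal (U x - a) ∂μ := by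
  simp only [fun x => ofReal_rpow_eq_lintegral_ofReal_sub hm (hU x)]
  rw [lintegral_lintegral_swap (by unfold Function.uncurry; fun_prop)]
  exact lintegral_congr fun a => lintegral_const_mul _ (by fun_prop)

lemma lintegral_ofReal_rpow_le {m : ℝ} (hm : 1 ≤ m) {U : α → ℝ} {V : β → ℝ} (hU : 0 ≤ U)
    (hV : 0 ≤ V) (hUm : Measurable U) (hVm : Measurable V)
    (h : ∀ a, 0 ≤ a → ∫⁻ x, ENNReal.ofReal (U x - a) ∂μ ≤ ∫⁻ x, ENNReal.ofReal (V x - a) ∂ν) :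
    ∫⁻ x, ENNReal.ofReal (U x ^ m) ∂μ ≤ ∫⁻ x, ENNReal.ofReal (V x ^ m) ∂ν := by
  rcases hm.eq_or_lt with rfl | hm
  · simpa using h 0 le_rfl
  · rw [lintegral_ofReal_rpow hm hU hUm, lintegral_ofReal_rpow hm hV hVm]
    exact setLIntegral_mono' measurableSet_Ioi fun a ha => mul_le_mul_right (h a (le_of_lt ha)) _

end LayerCake

section NormMoments

variable {ι : Type*} [Fintype ι] {μ ν : Measure (ι → ℝ)}

lemma integral_add_mul_sq_eq (hμ : MemLp id 2 μ) (s : ℝ) (i j : ι) :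
    ∫ x, (x i + s * x j) ^ 2 ∂μ =
      ∫ x, x i * x i ∂μ + 2 * s * ∫ x, x i * x j ∂μ + s ^ 2 * ∫ x, x j * x j ∂μ := by
  have hint (i j : ι) (c : ℝ) : Integrable (fun x => c * (x i * x j)) μ :=
    ((hμ.eval i).integrable_mul (hμ.eval j)).const_mul c
  have hexpand (x : ι → ℝ) :
      (x i + s * x j) ^ 2 = 1 * (x i * x i) + 2 * s * (x i * x j) + s ^ 2 * (x j * x j) := by ring
  simp only [hexpand]
  rw [integral_add ((hint i i 1).fun_add (hint i j _)) (hint j j _),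
    integral_add (hint i i 1) (hint i j _)]
  simp only [integral_const_mul, one_mul]

lemma integrable_norm_rpow [IsGaussian μ] {m : ℝ} (hm : 0 ≤ m) :
    Integrable (fun x => ‖x‖ ^ m) μ := by
  simpa [hm] using
    (IsGaussian.memLp_id μ (ENNReal.ofReal m) ENNReal.ofReal_ne_top).integrable_norm_rpow'

lemma lintegral_ofReal_norm_sub [IsGaussian μ] (a : ℝ) :
    ∫⁻ x, ENNReal.ofReal (‖x‖ - a) ∂μ = ENNReal.ofReal (∫ x, max (‖x‖ - a) 0 ∂μ) := by
  have hint : Integrable (fun x => ‖x‖ - a) μ :=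
    IsGaussian.integrable_id.norm.sub (integrable_const a)
  rw [ofReal_integral_eq_lintegral_ofReal hint.pos_part (ae_of_all _ fun x => le_max_right _ _)]
  simp

theorem integral_norm_rpow_le [IsGaussian μ] [IsGaussian ν]
    (hμ : ∫ x, x ∂μ = 0) (hν : ∫ x, x ∂ν = 0)
    (hcov : ∀ i j, 2 * |∫ x, x i * x j ∂μ - ∫ x, x i * x j ∂ν| ≤
      ∫ x, x i * x i ∂ν - ∫ x, x i * x i ∂μ + (∫ x, x j * x j ∂ν - ∫ x, x j * x j ∂μ))
    {m : ℝ} (hm : 1 ≤ m) :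
    ∫ x, ‖x‖ ^ m ∂μ ≤ ∫ x, ‖x‖ ^ m ∂ν := by
  have hquad (s : ℝ) (hs : |s| = 1) (i j) :
      ∫ x, (x i + s * x j) ^ 2 ∂μ ≤ ∫ x, (x i + s * x j) ^ 2 ∂ν := by
    have habs := le_abs_self (s * (∫ x, x i * x j ∂μ - ∫ x, x i * x j ∂ν))
    rw [abs_mul, hs, one_mul] at habs
    rw [integral_add_mul_sq_eq IsGaussian.memLp_two_id,
      integral_add_mul_sq_eq IsGaussian.memLp_two_id, ← sq_abs s, hs]
    linarith [hcov i j]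
  have hsub (i j) : ∫ x, (x i - x j) ^ 2 ∂μ ≤ ∫ x, (x i - x j) ^ 2 ∂ν := by
    simpa [sub_eq_add_neg] using hquad (-1) (by simp) i j
  have hadd (i j) : ∫ x, (x i + x j) ^ 2 ∂μ ≤ ∫ x, (x i + x j) ^ 2 ∂ν := by
    simpa using hquad 1 (by simp) i j
  have hnonneg (x : ι → ℝ) : 0 ≤ ‖x‖ ^ m := rpow_nonneg (norm_nonneg x) m
  have hlint : ∫⁻ x, ENNReal.ofReal (‖x‖ ^ m) ∂μ ≤ ∫⁻ x, ENNReal.ofReal (‖x‖ ^ m) ∂ν := by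
    refine lintegral_ofReal_rpow_le hm (fun x => norm_nonneg x) (fun x => norm_nonneg x)
      measurable_norm measurable_norm fun a ha => ?_
    rw [lintegral_ofReal_norm_sub, lintegral_ofReal_norm_sub]
    exact ENNReal.ofReal_le_ofReal (integral_max_norm_sub_le hμ hν hsub hadd ha)
  rwa [← ofReal_integral_eq_lintegral_ofReal (integrable_norm_rpow (by linarith))
      (ae_of_all _ hnonneg),
    ← ofReal_integral_eq_lintegral_ofReal (integrable_norm_rpow (by linarith))
      (ae_of_all _ hnonneg),
    ENNReal.ofReal_le_ofReal_iff (integral_nonneg hnonneg)] at hlint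

end NormMoments

section RegularizedNorm

variable {ι : Type*} [Fintype ι]

/-- The function `f_p` of the theorem with `p = 2 * n`: the `m`-th power of the `ℓᵖ` norm of `x`
extended by the coordinate `exp (-p)`, which keeps the base of the power positive. -/
noncomputable def regularizedNormPow (m : ℝ) (n : ℕ) (x : ι → ℝ) : ℝ :=
  ((∑ i, x i ^ (2 * n)) + Real.exp (-(2 * (n : ℝ)) ^ 2)) ^ (m / (2 * (n : ℝ)))

lemma measurable_regularizedNormPow (m : ℝ) (n : ℕ) :
    Measurable (regularizedNormPow m n : (ι → ℝ) → ℝ) := by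
  unfold regularizedNormPow
  fun_prop

lemma pow_rpow_div {r : ℝ} (hr : 0 ≤ r) (m : ℝ) {n : ℕ} (hn : 0 < n) :
    (r ^ (2 * n)) ^ (m / (2 * (n : ℝ))) = r ^ m := by
  rw [← rpow_natCast_mul hr]
  congr 1
  push_cast
  field_simp

lemma sum_pow_nonneg (n : ℕ) (x : ι → ℝ) : 0 ≤ ∑ i, x i ^ (2 * n) :=
  Finset.sum_nonneg fun _ _ => (even_two_mul n).pow_nonneg _

lemma norm_pow_le_sum_pow {n : ℕ} (hn : 0 < n) (x : ι → ℝ) :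
    ‖x‖ ^ (2 * n) ≤ ∑ i, x i ^ (2 * n) := by
  have hpos : (0 : ℝ) < (2 * n : ℕ) := by positivity
  rw [← rpow_natCast, ← le_rpow_inv_iff_of_pos (norm_nonneg x) (sum_pow_nonneg n x) hpos]
  refine (pi_norm_le_iff_of_nonneg (rpow_nonneg (sum_pow_nonneg n x) _)).2 fun i => ?_
  rw [le_rpow_inv_iff_of_pos (norm_nonneg _) (sum_pow_nonneg n x) hpos, rpow_natCast,
    norm_eq_abs, (even_two_mul n).pow_abs]
  exact Finset.single_le_sum (f := fun j => x j ^ (2 * n))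
    (fun j _ => (even_two_mul n).pow_nonneg _) (Finset.mem_univ i)

lemma norm_rpow_le_regularizedNormPow {m : ℝ} (hm : 0 ≤ m) {n : ℕ} (hn : 0 < n) (x : ι → ℝ) :
    ‖x‖ ^ m ≤ regularizedNormPow m n x := by
  rw [← pow_rpow_div (norm_nonneg x) m hn]
  refine rpow_le_rpow (by positivity) ?_ (by positivity)
  exact (norm_pow_le_sum_pow hn x).trans (le_add_of_nonneg_right (exp_pos _).le)

lemma regularizedNormPow_le {m : ℝ} (hm : 0 ≤ m) {n : ℕ} (hn : 0 < n) (x : ι → ℝ) :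
    regularizedNormPow m n x ≤
      (Fintype.card ι + 1 : ℝ) ^ (m / (2 * (n : ℝ))) * max ‖x‖ (exp (-(2 * (n : ℝ)))) ^ m := by
  set M := max ‖x‖ (exp (-(2 * (n : ℝ))))
  have hM : 0 ≤ M := (norm_nonneg x).trans (le_max_left _ _)
  have hcoord (i : ι) : x i ^ (2 * n) ≤ M ^ (2 * n) := by
    rw [← (even_two_mul n).pow_abs]
    exact pow_le_pow_left₀ (abs_nonneg _) ((norm_le_pi_norm x i).trans (le_max_left _ _)) _
  have hexp : exp (-(2 * (n : ℝ)) ^ 2) ≤ M ^ (2 * n) :=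
    calc exp (-(2 * (n : ℝ)) ^ 2) = exp (-(2 * (n : ℝ))) ^ (2 * n) := by
          rw [← exp_nat_mul]
          push_cast
          ring_nf
      _ ≤ M ^ (2 * n) := pow_le_pow_left₀ (exp_pos _).le (le_max_right _ _) _
  have hbase : (∑ i, x i ^ (2 * n)) + exp (-(2 * (n : ℝ)) ^ 2)
      ≤ (Fintype.card ι + 1) * M ^ (2 * n) := by
    rw [add_one_mul, ← nsmul_eq_mul]
    exact add_le_add (Finset.sum_le_card_nsmul _ _ _ fun i _ => hcoord i) hexp
  rw [← pow_rpow_div hM m hn, ← mul_rpow (by positivity) (by positivity)]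
  exact rpow_le_rpow (add_nonneg (sum_pow_nonneg n x) (exp_pos _).le) hbase (by positivity)

lemma tendsto_regularizedNormPow {m : ℝ} (hm : 0 ≤ m) (x : ι → ℝ) :
    Tendsto (fun n => regularizedNormPow m n x) atTop (𝓝 (‖x‖ ^ m)) := by
  have htwo : Tendsto (fun n : ℕ => 2 * (n : ℝ)) atTop atTop :=
    tendsto_natCast_atTop_atTop.const_mul_atTop two_pos
  have hcard : Tendsto (fun n : ℕ => (Fintype.card ι + 1 : ℝ) ^ (m / (2 * (n : ℝ)))) atTop
      (𝓝 1) := by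
    simpa using tendsto_const_nhds.rpow (htwo.const_div_atTop m)
      (Or.inl (by positivity : (Fintype.card ι + 1 : ℝ) ≠ 0))
  have hmax : Tendsto (fun n : ℕ => max ‖x‖ (exp (-(2 * (n : ℝ)))) ^ m) atTop (𝓝 (‖x‖ ^ m)) := by
    simpa using ((tendsto_const_nhds (x := ‖x‖)).max
      (tendsto_exp_neg_atTop_nhds_zero.comp htwo)).rpow_const (Or.inr hm)
  refine tendsto_of_tendsto_of_tendsto_of_le_of_le' tendsto_const_nhds
    (by simpa using hcard.mul hmax) ?_ ?_
  · filter_upwards [eventually_gt_atTop 0] with n hn using norm_rpow_le_regularizedNormPow hm hn x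
  · filter_upwards [eventually_gt_atTop 0] with n hn using regularizedNormPow_le hm hn x

lemma abs_regularizedNormPow_le {m : ℝ} (hm : 0 ≤ m) {n : ℕ} (hn : 0 < n) (x : ι → ℝ) :
    |regularizedNormPow m n x| ≤ (Fintype.card ι + 1 : ℝ) ^ m * (‖x‖ + 1) ^ m := by
  have hn₁ : (1 : ℝ) ≤ n := Nat.one_le_cast.2 hn
  rw [abs_of_nonneg ((rpow_nonneg (norm_nonneg x) m).trans
    (norm_rpow_le_regularizedNormPow hm hn x))]
  refine (regularizedNormPow_le hm hn x).trans ?_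
  gcongr
  · simp
  · exact div_le_self hm (by linarith)
  · refine max_le (by linarith) ((exp_le_one_iff.2 (by linarith)).trans ?_)
    linarith [norm_nonneg x]

theorem tendsto_integral_regularizedNormPow {μ : Measure (ι → ℝ)} [IsFiniteMeasure μ] {m : ℝ}
    (hm : 0 ≤ m) (hμ : MemLp id (ENNReal.ofReal m) μ) :
    Tendsto (fun n => ∫ x, regularizedNormPow m n x ∂μ) atTop (𝓝 (∫ x, ‖x‖ ^ m ∂μ)) := by
  have hbound : Integrable (fun x => (‖x‖ + 1) ^ m) μ := by
    refine (hμ.norm.add (memLp_const 1)).integrable_norm_rpow'.congr (ae_of_all _ fun x => ?_)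
    simp [ENNReal.toReal_ofReal hm, abs_of_nonneg (add_nonneg (norm_nonneg x) zero_le_one)]
  refine tendsto_integral_filter_of_dominated_convergence
    (fun x => (Fintype.card ι + 1 : ℝ) ^ m * (‖x‖ + 1) ^ m)
    (Eventually.of_forall fun n => (measurable_regularizedNormPow m n).aestronglyMeasurable)
    ?_ (hbound.const_mul _) (ae_of_all _ (tendsto_regularizedNormPow hm))
  filter_upwards [eventually_gt_atTop 0] with n hn
  exact ae_of_all _ (abs_regularizedNormPow_le hm hn)

end RegularizedNorm

namespace IsCenteredGaussianVec

variable {Ω : Type*} [MeasurableSpace Ω] {k : ℕ} {P : Measure Ω} {X : Ω → Fin k → ℝ}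

lemma map_eval (hX : IsCenteredGaussianVec P X) (i : Fin k) :
    P.map (fun ω => X ω i) = gaussianReal 0 (variance (fun ω => X ω i) P).toNNReal := by
  simpa [Pi.single_apply] using hX (Pi.single i 1)

protected lemma aemeasurable (hX : IsCenteredGaussianVec P X) : AEMeasurable X P := by
  refine aemeasurable_pi_iff.2 fun i => AEMeasurable.of_map_ne_zero ?_
  rw [hX.map_eval i]
  exact NeZero.ne _

lemma isGaussian_map (hX : IsCenteredGaussianVec P X) : IsGaussian (P.map X) := by
  refine isGaussian_of_map_eq_gaussianReal fun L => ?_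
  have hL : L ∘ X = fun ω => ∑ i, L (Pi.single i 1) * X ω i := by
    ext ω
    simpa [mul_comm] using congrArg L (pi_eq_sum_univ' (X ω))
  refine ⟨0, _, Eq.trans ?_ (hX fun i => L (Pi.single i 1))⟩
  rw [AEMeasurable.map_map_of_aemeasurable (by fun_prop) hX.aemeasurable, hL]

lemma integral_map_id (hX : IsCenteredGaussianVec P X) : ∫ x, x ∂(P.map X) = 0 := by
  have := hX.isGaussian_map
  ext i
  rw [eval_integral fun j => IsGaussian.integrable_id.eval j,
    integral_map hX.aemeasurable (measurable_pi_apply i).aestronglyMeasurable]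
  have hlaw : ∫ y, y ∂(P.map fun ω => X ω i) = 0 := by
    rw [hX.map_eval i]
    exact integral_id_gaussianReal
  rwa [integral_map (hX.aemeasurable.eval i) (by fun_prop)] at hlaw

lemma integral_map_mul (hX : IsCenteredGaussianVec P X) (i j : Fin k) :
    ∫ x, x i * x j ∂(P.map X) = ∫ ω, X ω i * X ω j ∂P :=
  integral_map hX.aemeasurable (by fun_prop)

lemma tendsto_integral_comp_regularizedNormPow (hX : IsCenteredGaussianVec P X) {m : ℝ}
    (hm : 0 ≤ m) :
    Tendsto (fun n => ∫ ω, regularizedNormPow m n (X ω) ∂P) atTop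
      (𝓝 (∫ x, ‖x‖ ^ m ∂(P.map X))) := by
  have := hX.isGaussian_map
  refine (tendsto_integral_regularizedNormPow hm
    (IsGaussian.memLp_id _ _ ENNReal.ofReal_ne_top)).congr fun n => ?_
  exact integral_map hX.aemeasurable (measurable_regularizedNormPow m n).aestronglyMeasurable

end IsCenteredGaussianVec

theorem limsup_fp_difference_nonpos_general
    {Ω Ω' : Type*} [MeasurableSpace Ω] [MeasurableSpace Ω'] {k : ℕ}
    {P : Measure Ω} {Q : Measure Ω'} {X : Ω → Fin k → ℝ} {Y : Ω' → Fin k → ℝ}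
    (hX : IsCenteredGaussianVec P X) (hY : IsCenteredGaussianVec Q Y)
    {SX SY : Fin k → Fin k → ℝ}
    (hSX : ∀ i j, SX i j = ∫ ω, X ω i * X ω j ∂P)
    (hSY : ∀ i j, SY i j = ∫ ω, Y ω i * Y ω j ∂Q)
    (hcond : ∀ i j, 2 * |SX i j - SY i j| ≤ SY i i - SX i i + (SY j j - SX j j))
    {m : ℝ} (hm : 1 ≤ m) :
    limsup
      (fun n : ℕ =>
        (∫ ω, ((∑ i, X ω i ^ (2 * n)) + Real.exp (-(2 * (n : ℝ)) ^ 2))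
            ^ (m / (2 * (n : ℝ))) ∂P)
        - ∫ ω, ((∑ i, Y ω i ^ (2 * n)) + Real.exp (-(2 * (n : ℝ)) ^ 2))
            ^ (m / (2 * (n : ℝ))) ∂Q)
      atTop ≤ 0 := by
  have := hX.isGaussian_map
  have := hY.isGaussian_map
  have hnorm : ∫ x, ‖x‖ ^ m ∂(P.map X) ≤ ∫ x, ‖x‖ ^ m ∂(Q.map Y) := by
    refine integral_norm_rpow_le hX.integral_map_id hY.integral_map_id (fun i j => ?_) hm
    simpa only [hX.integral_map_mul, hY.integral_map_mul, hSX, hSY] using hcond i j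
  have hlim := (hX.tendsto_integral_comp_regularizedNormPow (zero_le_one.trans hm)).sub
    (hY.tendsto_integral_comp_regularizedNormPow (zero_le_one.trans hm))
  exact hlim.limsup_eq.trans_le (sub_nonpos.2 hnorm)

/-- **Key limsup estimate.** Let `X ~ N(0, SX)`, `Y ~ N(0, SY)` be nondegenerate
centered Gaussian vectors in `ℝ^k` with
`2 |SX i j - SY i j| ≤ (SY i i - SX i i) + (SY j j - SX j j)` for all `i j`. Fix `m ≥ 1`
and, for an even integer `p = 2n`, set `f_p(x) = (x_1^p + ... + x_k^p + e^(-p²))^(m/p)`.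
Then `limsup_{p → ∞, p even} (E[f_p(X)] - E[f_p(Y)]) ≤ 0`. -/
theorem limsup_fp_difference_nonpos
    {Ω : Type*} [MeasurableSpace Ω] {k : ℕ} (P : Measure Ω) [IsProbabilityMeasure P]
    (X Y : Ω → Fin k → ℝ) (hXmeas : Measurable X) (hYmeas : Measurable Y)
    (hX : IsCenteredGaussianVec P X) (hY : IsCenteredGaussianVec P Y)
    (SX SY : Fin k → Fin k → ℝ)
    (hSX : ∀ i j, SX i j = ∫ ω, X ω i * X ω j ∂P)
    (hSY : ∀ i j, SY i j = ∫ ω, Y ω i * Y ω j ∂P)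
    (hcond : ∀ i j, 2 * |SX i j - SY i j| ≤ SY i i - SX i i + (SY j j - SX j j))
    (hvarX : ∀ i, 0 < variance (fun ω => X ω i) P)
    (hvarY : ∀ i, 0 < variance (fun ω => Y ω i) P)
    (hcorrX : ∀ i j, i ≠ j → |corr P (fun ω => X ω i) (fun ω => X ω j)| < 1)
    (hcorrY : ∀ i j, i ≠ j → |corr P (fun ω => Y ω i) (fun ω => Y ω j)| < 1)
    (m : ℝ) (hm : 1 ≤ m) :
    Filter.limsup
      (fun n : ℕ =>
        (∫ ω, ((∑ i, X ω i ^ (2 * n)) + Real.exp (-(2 * (n : ℝ)) ^ 2))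
            ^ (m / (2 * (n : ℝ))) ∂P)
        - ∫ ω, ((∑ i, Y ω i ^ (2 * n)) + Real.exp (-(2 * (n : ℝ)) ^ 2))
            ^ (m / (2 * (n : ℝ))) ∂P)
      atTop ≤ 0 :=
  limsup_fp_difference_nonpos_general hX hY hSX hSY hcond hm
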